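/- Let S be a vertex cut of a graph G with |S| ≥ 2. If the number of components of G − S is at least 3|S|, then G is not recursively partitionable. -/

import Mathlib

/-!
Fix `S` and colour every vertex outside `S` by its component of `G − S`. For a vertex set `A` let
`k = |A ∩ S|` and let `c` be the number of colours on `A \ S`. By induction on `|A|`, an RP set
satisfies `c ≤ 3` if `k = 1` and `c ≤ 3k − 1` if `k ≥ 2` (`SimpleGraph.IsRP.bound`); the theorem is
the case `A = V`. Working with colours instead of components of `A \ S` makes `c` subadditive under
splitting `A`. An RP part with `k = 0` is connected, hence monochromatic.

Suppose that `A` violates the bound. Then `k ≥ 1` and `c ≥ 4`, and a counting argument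
(`exists_good`) gives `0 < a < n = |A|` such that neither `a` nor `n − a` is the size of a colour
class. Split `A` into RP parts of sizes `a` and `n − a`. If one of them missed `S`, it would be a
proper subset of a colour class, and the other part would be a smaller violation. So both meet `S`
(`exists_split`). For `k = 1` this is absurd, and for `k ≥ 3` the bounds for the two parts add up
to at most `3k − 1`.

For `k = 2` it follows that `c = 6`, and that for every such `a` each part has one vertex of `S`
and exactly three whole colour classes. This is refuted in `no_two`. Sizes `a = 1, 2, 3` leave no
room for three classes, so they are sizes of classes. An RP set of even size with `k = 1` has a
colour class containing at least half of its vertices (`SimpleGraph.IsRP.half`); this makes `4` a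
class size, and with one more splitting also `6` (`SimpleGraph.IsRP.no_six`). Let `z` be the sixth
class size, so `n = 18 + z`. If `z ≠ 5`, splitting off `5` vertices forces `z = 1` and leaves an RP part of size
`14`; if `z = 5`, splitting off `7` leaves one of size `16`. Neither can have a class with half of
its vertices.
-/

open Finset

/-- `G.IsRP A` : the subgraph of `G` induced by the vertex set `A` is recursively
partitionable (RP): either `|A| = 1`, or `G[A]` is connected and for every integer partition
`a₁, …, a_k` (with `k ≥ 2`) of `|A|` there is a partition of `A` into parts of exactly these
sizes, each of which again induces an RP subgraph.  (The guard `B.card < A.card` is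
automatically satisfied by every part of such a partition; it is only needed for
well-foundedness of the recursion.) -/
def SimpleGraph.IsRP {V : Type} [DecidableEq V] (G : SimpleGraph V) (A : Finset V) : Prop :=
  A.card = 1 ∨ ((G.induce (A : Set V)).Connected ∧
    ∀ l : List ℕ, (∀ a ∈ l, 0 < a) → 2 ≤ l.length → l.sum = A.card →
      ∃ P : List (Finset V), P.map Finset.card = l ∧ P.Pairwise _root_.Disjoint ∧
        P.foldr (· ∪ ·) ∅ = A ∧ ∀ B ∈ P, ∀ _ : B.card < A.card, G.IsRP B)
termination_by A.card

/-- The vertices of `A` outside `S` that have colour `i` under `f`. -/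
def cls {V ι : Type} [DecidableEq V] [DecidableEq ι] (f : V → ι) (S A : Finset V) (i : ι) :
    Finset V :=
  {x ∈ A \ S | f x = i}

/-- The colours under `f` occurring in `A` outside `S`. -/
def cols {V ι : Type} [DecidableEq V] [DecidableEq ι] (f : V → ι) (S A : Finset V) : Finset ι :=
  (A \ S).image f

section Colours

variable {V ι : Type} [DecidableEq V] [DecidableEq ι] {f : V → ι} {S A B B' : Finset V} {i : ι}

theorem mem_cls {x : V} : x ∈ cls f S A i ↔ (x ∈ A ∧ x ∉ S) ∧ f x = i := by
  simp [cls]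

theorem mem_cols : i ∈ cols f S A ↔ ∃ x, (x ∈ A ∧ x ∉ S) ∧ f x = i := by
  simp [cols]

theorem card_eq_add_sum (f : V → ι) (S A : Finset V) :
    A.card = (A ∩ S).card + ∑ i ∈ cols f S A, (cls f S A i).card := by
  rw [← Finset.card_inter_add_card_sdiff A S,
    Finset.card_eq_sum_card_image f (A \ S)]
  rfl

theorem one_le_card_cls (hi : i ∈ cols f S A) : 1 ≤ (cls f S A i).card := by
  obtain ⟨x, hx⟩ := mem_cols.1 hi
  exact Finset.card_pos.2 ⟨x, mem_cls.2 hx⟩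

theorem card_cols_add_le (f : V → ι) (S A : Finset V) :
    (A ∩ S).card + (cols f S A).card ≤ A.card := by
  rw [card_eq_add_sum f S A, Finset.card_eq_sum_ones (cols f S A)]
  exact Nat.add_le_add_left (Finset.sum_le_sum fun i hi => one_le_card_cls hi) _

/-- Every colour class other than `i` has at least one vertex. -/
theorem card_cls_add_le (hi : i ∈ cols f S A) :
    (A ∩ S).card + (cls f S A i).card + (cols f S A).card ≤ A.card + 1 := by
  have h1 := card_eq_add_sum f S A
  rw [← Finset.add_sum_erase _ _ hi] at h1
  have h2 : ((cols f S A).erase i).card ≤ ∑ j ∈ (cols f S A).erase i, (cls f S A j).card := by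
    rw [Finset.card_eq_sum_ones]
    exact Finset.sum_le_sum fun j hj => one_le_card_cls (Finset.mem_of_mem_erase hj)
  have h3 := Finset.card_erase_add_one hi
  omega

theorem card_inter_union (h : _root_.Disjoint B B') :
    ((B ∪ B') ∩ S).card = (B ∩ S).card + (B' ∩ S).card := by
  rw [Finset.union_inter_distrib_right, Finset.card_union_of_disjoint]
  exact Finset.disjoint_of_subset_left Finset.inter_subset_left
    (Finset.disjoint_of_subset_right Finset.inter_subset_left h)

theorem cls_union : cls f S (B ∪ B') i = cls f S B i ∪ cls f S B' i := by
  ext x; simp only [mem_cls, Finset.mem_union]; tauto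

theorem card_cls_union (h : _root_.Disjoint B B') :
    (cls f S (B ∪ B') i).card = (cls f S B i).card + (cls f S B' i).card := by
  rw [cls_union, Finset.card_union_of_disjoint]
  rw [Finset.disjoint_left] at h ⊢
  intro x hx hx'
  exact h (mem_cls.1 hx).1.1 (mem_cls.1 hx').1.1

theorem cols_union : cols f S (B ∪ B') = cols f S B ∪ cols f S B' := by
  ext x; simp only [mem_cols, Finset.mem_union]; grind

theorem card_cls_eq_zero (hi : i ∉ cols f S A) : (cls f S A i).card = 0 := by
  rw [Finset.card_eq_zero, Finset.eq_empty_iff_forall_notMem]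
  exact fun x hx => hi (mem_cols.2 ⟨x, mem_cls.1 hx⟩)

theorem mem_cols_of_pos (hi : 0 < (cls f S A i).card) : i ∈ cols f S A := by
  by_contra h
  have := card_cls_eq_zero h
  omega

end Colours

section RP

variable {V ι : Type} [DecidableEq V] [DecidableEq ι] {G : SimpleGraph V} {f : V → ι}
  {S A : Finset V}

theorem SimpleGraph.IsRP.split (h : G.IsRP A) {a : ℕ} (ha : 1 ≤ a) (han : a < A.card) :
    ∃ B B' : Finset V, _root_.Disjoint B B' ∧ A = B ∪ B' ∧ B.card = a ∧ B'.card = A.card - a ∧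
      G.IsRP B ∧ G.IsRP B' := by
  rw [SimpleGraph.IsRP] at h
  rcases h with h | ⟨-, h⟩
  · omega
  obtain ⟨P, hP, hd, hu, hr⟩ := h [a, A.card - a] (by simp; omega) (by simp) (by simp; omega)
  obtain ⟨B, P, rfl, hB, hP⟩ := List.map_eq_cons_iff.1 hP
  obtain ⟨B', P, rfl, hB', hP⟩ := List.map_eq_cons_iff.1 hP
  obtain rfl := List.map_eq_nil_iff.1 hP
  simp at hd hu hr
  exact ⟨B, B', hd, hu.symm, hB, hB', hr.1 (by omega), hr.2 (by omega)⟩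

/-- An RP set that misses `S` is connected, hence monochromatic. -/
theorem SimpleGraph.IsRP.mono (hf : ∀ x y, x ∉ S → y ∉ S → G.Adj x y → f x = f y) (h : G.IsRP A)
    (hA : (A ∩ S).card = 0) : ∃ i, A = cls f S A i := by
  have hS : ∀ x ∈ A, x ∉ S := by
    intro x hx hxS
    have := Finset.card_eq_zero.1 hA
    exact Finset.notMem_empty x (this ▸ Finset.mem_inter.2 ⟨hx, hxS⟩)
  suffices hs : ∃ i, ∀ x ∈ A, f x = i by
    obtain ⟨i, hi⟩ := hs
    refine ⟨i, ?_⟩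
    ext x
    rw [mem_cls]
    exact ⟨fun hx => ⟨⟨hx, hS x hx⟩, hi x hx⟩, fun hx => hx.1.1⟩
  rw [SimpleGraph.IsRP] at h
  rcases h with h | ⟨h, -⟩
  · obtain ⟨v, rfl⟩ := Finset.card_eq_one.1 h
    exact ⟨f v, by simp⟩
  · obtain ⟨v⟩ := h.nonempty
    refine ⟨f v, fun x hx => ?_⟩
    obtain ⟨w⟩ := h.preconnected ⟨x, hx⟩ v
    have key : ∀ (y z : (A : Set V)), (G.induce (A : Set V)).Walk y z → f y = f z := by
      intro y z w
      induction w with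
      | nil => rfl
      | cons hadj _ ih =>
        rename_i u v' _ _
        exact (hf _ _ (hS _ u.2) (hS _ v'.2) hadj).trans ih
    exact key _ _ w

/-- One of the two halves of the vertex set misses `S` and hence lies in a single class. -/
theorem SimpleGraph.IsRP.half (hf : ∀ x y, x ∉ S → y ∉ S → G.Adj x y → f x = f y) (h : G.IsRP A)
    (hA : (A ∩ S).card = 1) {m : ℕ} (hm : 1 ≤ m) (hcard : A.card = 2 * m) :
    ∃ i ∈ cols f S A, m ≤ (cls f S A i).card := by
  obtain ⟨B, B', hd, rfl, hB, hB', hr, hr'⟩ := h.split hm (by omega)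
  have hk := card_inter_union (S := S) hd
  suffices hs : ∃ i, m ≤ (cls f S (B ∪ B') i).card by
    obtain ⟨i, hi⟩ := hs
    exact ⟨i, mem_cols_of_pos (by omega), hi⟩
  have h0 : (B ∩ S).card = 0 ∨ (B' ∩ S).card = 0 := by omega
  rcases h0 with h0 | h0
  · obtain ⟨i, hi⟩ := hr.mono hf h0
    have := congrArg Finset.card hi
    exact ⟨i, by rw [card_cls_union hd]; omega⟩
  · obtain ⟨i, hi⟩ := hr'.mono hf h0
    have := congrArg Finset.card hi
    exact ⟨i, by rw [card_cls_union hd]; omega⟩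

/-- By `SimpleGraph.IsRP.half` the class sizes would have to be `3, 1, 1`; a part of size `2` that misses `S`
comes from the class of size `3`, and the remaining `1, 1, 1` contradicts `SimpleGraph.IsRP.half`. -/
theorem SimpleGraph.IsRP.no_six (hf : ∀ x y, x ∉ S → y ∉ S → G.Adj x y → f x = f y) (h : G.IsRP A)
    (hA : (A ∩ S).card = 1) (hc : (cols f S A).card = 3) : A.card ≠ 6 := by
  intro hn
  obtain ⟨i, hi, hi3⟩ := h.half hf hA (m := 3) (by omega) (by omega)
  have hle : ∀ j ∈ cols f S A, (cls f S A j).card ≤ 3 := by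
    intro j hj
    have := card_cls_add_le hj
    omega
  have hother : ∀ j, j ≠ i → (cls f S A j).card ≤ 1 := by
    intro j hji
    by_cases hj : j ∈ cols f S A
    · have h1 := card_eq_add_sum f S A
      have hj' : j ∈ (cols f S A).erase i := Finset.mem_erase.2 ⟨hji, hj⟩
      rw [← Finset.add_sum_erase _ _ hi, ← Finset.add_sum_erase _ _ hj'] at h1
      have h3 := Finset.card_erase_add_one hi
      have h4 := Finset.card_erase_add_one hj'
      have h2 : (((cols f S A).erase i).erase j).card ≤
          ∑ l ∈ ((cols f S A).erase i).erase j, (cls f S A l).card := by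
        rw [Finset.card_eq_sum_ones]
        exact Finset.sum_le_sum fun l hl =>
          one_le_card_cls (Finset.mem_of_mem_erase (Finset.mem_of_mem_erase hl))
      omega
    · rw [card_cls_eq_zero hj]; omega
  obtain ⟨B, B', hd, rfl, hB, hB', hr, hr'⟩ := h.split (a := 2) (by omega) (by omega)
  have hk := card_inter_union (S := S) hd
  have h0 : (B ∩ S).card = 0 ∨ (B' ∩ S).card = 0 := by omega
  have hadd : ∀ j, (cls f S (B ∪ B') j).card = (cls f S B j).card + (cls f S B' j).card :=
    fun j => card_cls_union hd
  rcases h0 with h0 | h0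
  · obtain ⟨j, hj⟩ := hr.mono hf h0
    have hj := congrArg Finset.card hj
    obtain ⟨l, -, hl⟩ := hr'.half hf (by omega) (m := 2) (by omega) (by omega)
    have hjl : j = i := by
      by_contra hne
      have := hother j hne
      have := hadd j
      omega
    have hli : l = i := by
      by_contra hne
      have := hother l hne
      have := hadd l
      omega
    subst hjl hli
    have := hadd l
    have := hle l hi
    omega
  · obtain ⟨j, hj⟩ := hr'.mono hf h0
    have hj := congrArg Finset.card hj
    have h1 := hadd j
    have := hle j (mem_cols_of_pos (by omega))
    omega

end RP

/-- If every `a ≤ n / 2` were a class size or complementary to one, distinct `a` would need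
distinct classes, of size at least `a`, and the classes would not fit into `n` vertices. -/
theorem exists_good {ι : Type} [DecidableEq ι] (I : Finset ι) (s : ι → ℕ) (n k : ℕ)
    (hn : n = k + ∑ i ∈ I, s i) (hk : 1 ≤ k) (hI : 4 ≤ I.card) (hs : ∀ i ∈ I, 1 ≤ s i) :
    ∃ a, 1 ≤ a ∧ a < n ∧ ∀ i ∈ I, s i ≠ a ∧ s i ≠ n - a := by
  by_contra! hcon
  have hIs : I.card + ∑ i ∈ I, (s i - 1) = ∑ i ∈ I, s i := by
    rw [Finset.card_eq_sum_ones, ← Finset.sum_add_distrib]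
    exact Finset.sum_congr rfl fun i hi => by have := hs i hi; omega
  have h1 : ∀ a, ∃ i, a < n / 2 → i ∈ I ∧ (s i = a + 1 ∨ s i = n - (a + 1)) := by
    intro a
    by_cases ha : a < n / 2
    · obtain ⟨i, hi, h⟩ := hcon (a + 1) (by omega) (by omega)
      exact ⟨i, fun _ => ⟨hi, by tauto⟩⟩
    · obtain ⟨i, -⟩ := Finset.card_pos.1 (by omega : 0 < I.card)
      exact ⟨i, fun h => absurd h ha⟩
  choose g hg using h1
  have hinj : Set.InjOn g (Finset.range (n / 2) : Finset ℕ) := by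
    intro a ha b hb hab
    simp only [Finset.coe_range, Set.mem_Iio] at ha hb
    have h2 := (hg a ha).2
    have h3 := (hg b hb).2
    rw [hab] at h2
    omega
  have h2 : ∑ a ∈ Finset.range (n / 2), a ≤ ∑ i ∈ I, (s i - 1) := by
    calc ∑ a ∈ Finset.range (n / 2), a
        ≤ ∑ a ∈ Finset.range (n / 2), (s (g a) - 1) := by
          refine Finset.sum_le_sum fun a ha => ?_
          have ha := Finset.mem_range.1 ha
          have := (hg a ha).2
          omega
      _ = ∑ i ∈ (Finset.range (n / 2)).image g, (s i - 1) := by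
          rw [Finset.sum_image hinj]
      _ ≤ ∑ i ∈ I, (s i - 1) := by
          refine Finset.sum_le_sum_of_subset ?_
          intro i hi
          obtain ⟨a, ha, rfl⟩ := Finset.mem_image.1 hi
          exact (hg a (Finset.mem_range.1 ha)).1
  have h3 := Finset.sum_range_id_mul_two (n / 2)
  obtain ⟨h, hh⟩ : ∃ h, h = n / 2 := ⟨_, rfl⟩
  rw [← hh] at h2 h3
  have h4 : n ≤ 2 * h + 1 := by omega
  have h5 : 5 + ∑ a ∈ Finset.range h, a ≤ n := by omega
  -- With `n ≤ 2h + 1` this reads `h (h - 1) ≤ 4 h - 8`, a quadratic without real solutions.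
  obtain _ | m := h
  · omega
  · simp only [Nat.add_sub_cancel] at h3
    have h6 : (m + 1) * m + 4 ≤ 4 * m := by omega
    zify at h6
    nlinarith [sq_nonneg (2 * (m : ℤ) - 3)]

/-- The bounds on the number of colours in a set `A` that hold when `A` is RP, in terms of
`|A ∩ S|`; sets that miss `S` are treated separately. -/
def Bound {V ι : Type} [DecidableEq V] [DecidableEq ι] (f : V → ι) (S A : Finset V) : Prop :=
  ((A ∩ S).card = 1 → (cols f S A).card ≤ 3) ∧
    (2 ≤ (A ∩ S).card → (cols f S A).card + 1 ≤ 3 * (A ∩ S).card)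

section Main

variable {V ι : Type} [DecidableEq V] [DecidableEq ι] {G : SimpleGraph V} {f : V → ι}
  {S A : Finset V}

/-- If `B` is monochromatic but not a whole class of `B ∪ B'`, then `B'` still has all colours. -/
theorem cols_subset_of_mono {B B' : Finset V} {i : ι} (hB : B = cls f S B i)
    (hne : ∀ j ∈ cols f S (B ∪ B'), (cls f S (B ∪ B') j).card ≠ B.card)
    (hd : _root_.Disjoint B B') : cols f S (B ∪ B') ⊆ cols f S B' := by
  intro j hj
  by_contra hj'
  have h0 := card_cls_eq_zero hj'
  have h1 := card_cls_union (f := f) (S := S) (i := j) hd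
  have h2 := hne j hj
  rw [cols_union, Finset.mem_union] at hj
  obtain ⟨x, hx, rfl⟩ := mem_cols.1 (hj.resolve_right hj')
  have h3 : f x = i := by
    have : x ∈ cls f S B i := hB ▸ hx.1
    exact (mem_cls.1 this).2
  rw [h3] at h0 h1 h2
  rw [← hB] at h1
  omega

/-- In a minimal violation of the bound, splitting off a number of vertices that is neither a
class size nor complementary to one gives two parts that both meet `S`. -/
theorem exists_split (hf : ∀ x y, x ∉ S → y ∉ S → G.Adj x y → f x = f y) (h : G.IsRP A)
    (ih : ∀ B : Finset V, B.card < A.card → G.IsRP B → Bound f S B) (hb : ¬ Bound f S A)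
    {a : ℕ} (ha : 1 ≤ a) (han : a < A.card)
    (hgood : ∀ i ∈ cols f S A, (cls f S A i).card ≠ a ∧ (cls f S A i).card ≠ A.card - a) :
    ∃ B B' : Finset V, _root_.Disjoint B B' ∧ A = B ∪ B' ∧ B.card = a ∧ B'.card = A.card - a ∧
      G.IsRP B ∧ G.IsRP B' ∧ 1 ≤ (B ∩ S).card ∧ 1 ≤ (B' ∩ S).card := by
  obtain ⟨B, B', hd, rfl, hB, hB', hr, hr'⟩ := h.split ha han
  refine ⟨B, B', hd, rfl, hB, hB', hr, hr', ?_, ?_⟩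
  · by_contra h0
    obtain ⟨i, hi⟩ := hr.mono hf (S := S) (by omega)
    have hsub := cols_subset_of_mono hi (fun j hj => hB ▸ (hgood j hj).1) hd
    have hk := card_inter_union (S := S) hd
    have hb' := ih B' (by omega) hr'
    have := Finset.card_le_card hsub
    unfold Bound at hb hb'
    omega
  · by_contra h0
    obtain ⟨i, hi⟩ := hr'.mono hf (S := S) (by omega)
    have hsub := cols_subset_of_mono (B' := B) hi
      (fun j hj => by
        rw [Finset.union_comm] at hj ⊢
        exact hB' ▸ (hgood j hj).2) hd.symm
    rw [Finset.union_comm] at hsub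
    have hk := card_inter_union (S := S) hd
    have hb' := ih B (by omega) hr
    have := Finset.card_le_card hsub
    unfold Bound at hb hb'
    omega

/-- If a union of two sets with three colours each has six colours, the classes of each of the two
sets are whole classes of the union. -/
theorem card_cls_of_six {B B' : Finset V} (hd : _root_.Disjoint B B')
    (hc : (cols f S (B ∪ B')).card = 6) (hB : (cols f S B).card ≤ 3)
    (hB' : (cols f S B').card ≤ 3) :
    (cols f S B).card = 3 ∧ (cols f S B').card = 3 ∧
    (∀ i ∈ cols f S B, i ∈ cols f S (B ∪ B') ∧ (cls f S B i).card = (cls f S (B ∪ B') i).card) ∧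
    (∀ i ∈ cols f S B', i ∈ cols f S (B ∪ B') ∧
      (cls f S B' i).card = (cls f S (B ∪ B') i).card) := by
  rw [cols_union] at hc ⊢
  have h1 := Finset.card_union_add_card_inter (cols f S B) (cols f S B')
  have h2 : cols f S B ∩ cols f S B' = ∅ := Finset.card_eq_zero.1 (by omega)
  refine ⟨by omega, by omega, fun i hi => ⟨Finset.mem_union_left _ hi, ?_⟩,
    fun i hi => ⟨Finset.mem_union_right _ hi, ?_⟩⟩
  · have h3 : i ∉ cols f S B' := fun h =>
      Finset.notMem_empty i (h2 ▸ Finset.mem_inter.2 ⟨hi, h⟩)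
    rw [card_cls_union hd, card_cls_eq_zero h3, add_zero]
  · have h3 : i ∉ cols f S B := fun h =>
      Finset.notMem_empty i (h2 ▸ Finset.mem_inter.2 ⟨h, hi⟩)
    rw [card_cls_union hd, card_cls_eq_zero h3, zero_add]

/-- The hypothesis `hsp` describes a minimal violation of the bound with two vertices in `S`; it
forces the class sizes `1, 2, 3, 4, 6` one after another and leaves no value for the sixth one. -/
theorem no_two (hf : ∀ x y, x ∉ S → y ∉ S → G.Adj x y → f x = f y)
    (hk : (A ∩ S).card = 2) (hc : (cols f S A).card = 6)
    (hsp : ∀ a, 1 ≤ a → a < A.card →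
      (∀ i ∈ cols f S A, (cls f S A i).card ≠ a ∧ (cls f S A i).card ≠ A.card - a) →
      ∃ B B' : Finset V, B.card = a ∧ B'.card = A.card - a ∧ G.IsRP B ∧ G.IsRP B' ∧
        (B ∩ S).card = 1 ∧ (B' ∩ S).card = 1 ∧ (cols f S B).card = 3 ∧
        (∀ i ∈ cols f S B, i ∈ cols f S A ∧ (cls f S B i).card = (cls f S A i).card) ∧
        (∀ i ∈ cols f S B', i ∈ cols f S A ∧ (cls f S B' i).card = (cls f S A i).card)) :
    False := by
  have hn := card_cols_add_le f S A
  have hbig : ∀ i ∈ cols f S A, (cls f S A i).card + 7 ≤ A.card := by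
    intro i hi
    have := card_cls_add_le hi
    omega
  have hsmall : ∀ a, 1 ≤ a → a < 7 → (¬ ∃ i ∈ cols f S A, (cls f S A i).card = a) →
      ∃ B B' : Finset V, B.card = a ∧ B'.card = A.card - a ∧ G.IsRP B ∧ G.IsRP B' ∧
        (B ∩ S).card = 1 ∧ (B' ∩ S).card = 1 ∧ (cols f S B).card = 3 ∧
        (∀ i ∈ cols f S B, i ∈ cols f S A ∧ (cls f S B i).card = (cls f S A i).card) ∧
        (∀ i ∈ cols f S B', i ∈ cols f S A ∧ (cls f S B' i).card = (cls f S A i).card) := by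
    intro a ha ha7 hno
    refine hsp a ha (by omega) fun i hi => ⟨fun h => hno ⟨i, hi, h⟩, ?_⟩
    have := hbig i hi
    omega
  have h123 : ∀ a, 1 ≤ a → a < 4 → ∃ i ∈ cols f S A, (cls f S A i).card = a := by
    intro a ha ha4
    by_contra hno
    obtain ⟨B, B', hB, -, -, -, hkB, -, hcB, -⟩ := hsmall a ha (by omega) hno
    have := card_cols_add_le f S B
    omega
  have h4 : ∃ i ∈ cols f S A, (cls f S A i).card = 4 := by
    by_contra hno
    obtain ⟨B, B', hB, -, hr, -, hkB, -, hcB, -⟩ := hsmall 4 (by omega) (by omega) hno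
    obtain ⟨i, hi, hi2⟩ := hr.half hf hkB (m := 2) (by omega) (by omega)
    have := card_cls_add_le hi
    omega
  have h6 : ∃ i ∈ cols f S A, (cls f S A i).card = 6 := by
    by_contra hno
    obtain ⟨B, B', hB, -, hr, -, hkB, -, hcB, -⟩ := hsmall 6 (by omega) (by omega) hno
    exact hr.no_six hf hkB hcB hB
  obtain ⟨i1, m1, s1⟩ := h123 1 (by omega) (by omega)
  obtain ⟨i2, m2, s2⟩ := h123 2 (by omega) (by omega)
  obtain ⟨i3, m3, s3⟩ := h123 3 (by omega) (by omega)
  obtain ⟨i4, m4, s4⟩ := h4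
  obtain ⟨i6, m6, s6⟩ := h6
  have e1 : i1 ∉ ({i2, i3, i4, i6} : Finset ι) := by
    simp only [Finset.mem_insert, Finset.mem_singleton]
    rintro (rfl | rfl | rfl | rfl) <;> omega
  have e2 : i2 ∉ ({i3, i4, i6} : Finset ι) := by
    simp only [Finset.mem_insert, Finset.mem_singleton]
    rintro (rfl | rfl | rfl) <;> omega
  have e3 : i3 ∉ ({i4, i6} : Finset ι) := by
    simp only [Finset.mem_insert, Finset.mem_singleton]
    rintro (rfl | rfl) <;> omega
  have e4 : i4 ∉ ({i6} : Finset ι) := by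
    simp only [Finset.mem_singleton]
    rintro rfl; omega
  have hsub : ({i1, i2, i3, i4, i6} : Finset ι) ⊆ cols f S A := by
    simp [Finset.insert_subset_iff, m1, m2, m3, m4, m6]
  have hcard5 : ({i1, i2, i3, i4, i6} : Finset ι).card = 5 := by
    rw [Finset.card_insert_of_notMem e1, Finset.card_insert_of_notMem e2,
      Finset.card_insert_of_notMem e3, Finset.card_insert_of_notMem e4, Finset.card_singleton]
  have hrest : (cols f S A \ {i1, i2, i3, i4, i6}).card = 1 := by
    rw [Finset.card_sdiff_of_subset hsub]; omega
  obtain ⟨j, hj⟩ := Finset.card_eq_one.1 hrest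
  have hall : ∀ i ∈ cols f S A, i = i1 ∨ i = i2 ∨ i = i3 ∨ i = i4 ∨ i = i6 ∨ i = j := by
    intro i hi
    by_cases h : i ∈ ({i1, i2, i3, i4, i6} : Finset ι)
    · simp only [Finset.mem_insert, Finset.mem_singleton] at h
      tauto
    · have : i ∈ cols f S A \ {i1, i2, i3, i4, i6} := Finset.mem_sdiff.2 ⟨hi, h⟩
      rw [hj, Finset.mem_singleton] at this
      tauto
  have hsum := card_eq_add_sum f S A
  rw [← Finset.sum_sdiff hsub, hj, Finset.sum_singleton, Finset.sum_insert e1,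
    Finset.sum_insert e2, Finset.sum_insert e3, Finset.sum_insert e4, Finset.sum_singleton,
    s1, s2, s3, s4, s6, hk] at hsum
  have hle : (cls f S A j).card ≤ 6 → ∀ i ∈ cols f S A, (cls f S A i).card ≤ 6 := by
    intro hz i hi
    rcases hall i hi with rfl | rfl | rfl | rfl | rfl | rfl <;> omega
  by_cases hz : (cls f S A j).card = 5
  · obtain ⟨B, B', -, hB', -, hr', -, hkB', -, -, hcl'⟩ := hsp 7 (by omega) (by omega)
      (fun i hi => by have := hle (by omega) i hi; omega)
    obtain ⟨i, hi, hi8⟩ := hr'.half hf hkB' (m := 8) (by omega) (by omega)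
    have h1 := hcl' i hi
    have := hle (by omega) i h1.1
    omega
  · obtain ⟨B, B', hB, hB', hr, hr', hkB, hkB', hcB, hcl, hcl'⟩ := hsmall 5 (by omega) (by omega)
      (by
        rintro ⟨i, hi, h5⟩
        rcases hall i hi with rfl | rfl | rfl | rfl | rfl | rfl <;> omega)
    -- The three classes in `B` have total size `4`, so each has size at most `2`.
    have hJ : cols f S B ⊆ {i1, i2, j} := by
      intro i hi
      have h1 := hcl i hi
      have h2 := card_cls_add_le hi
      simp only [Finset.mem_insert, Finset.mem_singleton]
      rcases hall i h1.1 with rfl | rfl | rfl | rfl | rfl | rfl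
      · tauto
      · tauto
      · omega
      · omega
      · omega
      · tauto
    have hJ' : cols f S B = {i1, i2, j} :=
      Finset.eq_of_subset_of_card_le hJ (by rw [hcB]; exact Finset.card_le_three)
    have hi2 := hcl i2 (by rw [hJ']; simp)
    have hjB := hcl j (by rw [hJ']; simp)
    have h3 := card_eq_add_sum f S B
    have hj0 : j ∉ ({i1, i2, i3, i4, i6} : Finset ι) :=
      (Finset.mem_sdiff.1 (hj ▸ Finset.mem_singleton_self j)).2
    have hz1 : (cls f S A j).card = 1 := by
      have hi1 := hcl i1 (by rw [hJ']; simp)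
      rw [hJ', Finset.sum_insert (by simp at e1 hj0 ⊢; tauto),
        Finset.sum_insert (by simp at hj0 ⊢; tauto), Finset.sum_singleton] at h3
      omega
    obtain ⟨i, hi, hi7⟩ := hr'.half hf hkB' (m := 7) (by omega) (by omega)
    have h1 := hcl' i hi
    have := hle (by omega) i h1.1
    omega

theorem SimpleGraph.IsRP.bound (hf : ∀ x y, x ∉ S → y ∉ S → G.Adj x y → f x = f y) (h : G.IsRP A) :
    Bound f S A := by
  induction hn : A.card using Nat.strong_induction_on generalizing A with
  | _ n ih =>
  have ih : ∀ B : Finset V, B.card < A.card → G.IsRP B → Bound f S B :=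
    fun B hB hr => ih B.card (by omega) hr rfl
  by_contra hb
  have hpre : 1 ≤ (A ∩ S).card ∧ 4 ≤ (cols f S A).card := by
    unfold Bound at hb
    omega
  have hsp := fun a => exists_split (a := a) hf h ih hb
  obtain ⟨a, ha, han, hgood⟩ := exists_good (cols f S A) (fun i => (cls f S A i).card) A.card
    (A ∩ S).card (card_eq_add_sum f S A) hpre.1 hpre.2 (fun i hi => one_le_card_cls hi)
  have hcu : ∀ B B' : Finset V, A = B ∪ B' →
      (cols f S A).card ≤ (cols f S B).card + (cols f S B').card := by
    rintro B B' rfl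
    rw [cols_union]
    exact Finset.card_union_le _ _
  have hku : ∀ B B' : Finset V, _root_.Disjoint B B' → A = B ∪ B' →
      (A ∩ S).card = (B ∩ S).card + (B' ∩ S).card := by
    rintro B B' hd rfl
    exact card_inter_union hd
  have h26 : (A ∩ S).card = 2 ∧ (cols f S A).card = 6 := by
    obtain ⟨B, B', hd, hu, hB, hB', hr, hr', hk, hk'⟩ := hsp a ha han hgood
    have h1 := hcu B B' hu
    have h2 := hku B B' hd hu
    have h3 := ih B (by omega) hr
    have h4 := ih B' (by omega) hr'
    unfold Bound at hb h3 h4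
    omega
  refine no_two (G := G) hf h26.1 h26.2 fun a ha han hgood => ?_
  obtain ⟨B, B', hd, hu, hB, hB', hr, hr', hk, hk'⟩ := hsp a ha han hgood
  have h2 := hku B B' hd hu
  have h3 := (ih B (by omega) hr).1 (by omega)
  have h4 := (ih B' (by omega) hr').1 (by omega)
  obtain ⟨c1, -, c3, c4⟩ := card_cls_of_six hd (hu ▸ h26.2) h3 h4
  rw [← hu] at c3 c4
  exact ⟨B, B', hB, hB', hr, hr', by omega, by omega, c1, c3, c4⟩

end Main

/-- If `S` is a vertex cut of a graph `G` with `|S| ≥ 2` and `G − S` has at least `3|S|`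
connected components, then `G` is not recursively partitionable. -/
theorem not_isRP_of_many_components {V : Type} [Fintype V] [DecidableEq V]
    (G : SimpleGraph V) (S : Finset V) (hS : 2 ≤ S.card)
    (hcut : ¬ (G.induce ((↑S : Set V)ᶜ)).Connected)
    (hc : 3 * S.card ≤ Nat.card (G.induce ((↑S : Set V)ᶜ)).ConnectedComponent) :
    ¬ G.IsRP Finset.univ := by
  classical
  intro h
  -- Vertices of `S` get the irrelevant colour `none`.
  let f : V → Option (G.induce ((↑S : Set V)ᶜ)).ConnectedComponent := fun x =>
    if hx : x ∈ S then none
    else some ((G.induce ((↑S : Set V)ᶜ)).connectedComponentMk ⟨x, by simpa using hx⟩)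
  have hf : ∀ x y, x ∉ S → y ∉ S → G.Adj x y → f x = f y := by
    intro x y hx hy hadj
    simp only [f, hx, hy, dite_false, Option.some.injEq]
    exact SimpleGraph.ConnectedComponent.sound (SimpleGraph.Adj.reachable (by simpa using hadj))
  have hb := (h.bound hf).2
  rw [Finset.univ_inter] at hb
  have hb := hb hS
  have hle : Nat.card (G.induce ((↑S : Set V)ᶜ)).ConnectedComponent ≤
      (cols f S Finset.univ).card := by
    rw [Nat.card_eq_fintype_card, ← Finset.card_univ,
      ← Finset.card_map Function.Embedding.some]
    refine Finset.card_le_card fun o ho => ?_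
    obtain ⟨C, -, rfl⟩ := Finset.mem_map.1 ho
    induction C using SimpleGraph.ConnectedComponent.ind with
    | _ v =>
      have hv : (v : V) ∉ S := fun h => v.2 (Finset.mem_coe.2 h)
      exact mem_cols.2 ⟨v, ⟨Finset.mem_univ _, hv⟩, by simp [f, hv]⟩
  omega
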